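/- Let X = (X_1,…,X_n) be a random vector such that X_1 + ⋯ + X_n is almost surely equal to a constant. Then DQ^VaR_α(X) = 0 for every α ∈ (0, 1/n), and, if the X_i are integrable, DQ^ES_α(X) = 0 for every α ∈ (0,1). -/

import Mathlib

open MeasureTheory ProbabilityTheory Filter Set

namespace DQ

variable {Ω : Type*} [MeasurableSpace Ω]

/-- An atomless probability measure: every non-null measurable set has a measurable
subset of strictly smaller positive measure. -/
def Atomless (P : Measure Ω) : Prop :=
  ∀ A : Set Ω, MeasurableSet A → 0 < P A →
    ∃ B, MeasurableSet B ∧ B ⊆ A ∧ 0 < P B ∧ P B < P A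

/-- Value-at-Risk at level `α` (small-`α` convention):
`VaR_α(X) = inf {x | P(X ≤ x) ≥ 1 - α}`. -/
noncomputable def VaR (P : Measure Ω) (α : ℝ) (X : Ω → ℝ) : ℝ :=
  sInf {x : ℝ | 1 - α ≤ (P {ω | X ω ≤ x}).toReal}

/-- Expected Shortfall at level `α`: `ES_α(X) = (1/α) ∫_0^α VaR_β(X) dβ`. -/
noncomputable def ES (P : Measure Ω) (α : ℝ) (X : Ω → ℝ) : ℝ :=
  (1 / α) * ∫ β in Set.Ioo (0 : ℝ) α, VaR P β X

/-- `α* = inf {β ∈ (0,1) | VaR_β(∑ Xᵢ) ≤ ∑ VaR_α(Xᵢ)}`, with `inf ∅ = 1`. -/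
noncomputable def alphaStarVaR (P : Measure Ω) (α : ℝ) {n : ℕ} (X : Fin n → Ω → ℝ) : ℝ :=
  sInf ({β ∈ Set.Ioo (0 : ℝ) 1 |
    VaR P β (fun ω => ∑ i, X i ω) ≤ ∑ i, VaR P α (X i)} ∪ {1})

/-- Diversification quotient based on VaR: `DQ^VaR_α(X) = α*/α`. -/
noncomputable def DQVaR (P : Measure Ω) (α : ℝ) {n : ℕ} (X : Fin n → Ω → ℝ) : ℝ :=
  alphaStarVaR P α X / α

/-- `α* = inf {β ∈ (0,1) | ES_β(∑ Xᵢ) ≤ ∑ ES_α(Xᵢ)}`, with `inf ∅ = 1`. -/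
noncomputable def alphaStarES (P : Measure Ω) (α : ℝ) {n : ℕ} (X : Fin n → Ω → ℝ) : ℝ :=
  sInf ({β ∈ Set.Ioo (0 : ℝ) 1 |
    ES P β (fun ω => ∑ i, X i ω) ≤ ∑ i, ES P α (X i)} ∪ {1})

/-- Diversification quotient based on ES: `DQ^ES_α(X) = α*/α`. -/
noncomputable def DQES (P : Measure Ω) (α : ℝ) {n : ℕ} (X : Fin n → Ω → ℝ) : ℝ :=
  alphaStarES P α X / α

end DQ

/-!
Write `S = X₁ + ⋯ + Xₙ`, almost surely equal to `c`. Every quantile of `S`, hence every Expected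
Shortfall of `S`, equals `c`, so the diversification quotients vanish as soon as
`c ≤ ∑ VaR_α(Xᵢ)`, respectively `c ≤ ∑ ES_α(Xᵢ)`.

For VaR this is the quantile inequality `VaR_{∑ αᵢ}(∑ Xᵢ) ≤ ∑ VaR_{αᵢ}(Xᵢ)`, valid when
`∑ αᵢ < 1`: off the events `{Xᵢ > VaR_{αᵢ}(Xᵢ)}`, whose probabilities add up to at most `∑ αᵢ`,
the sum is at most the right-hand side. With all `αᵢ = α < 1 / n` the left-hand side is `c`.

For ES, `β ↦ VaR_β(X)` on `(0, 1)` is a decreasing function with the distribution of `X`. Its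
average over `(0, α)`, which is `ES_α(X)`, is therefore at least its average over `(0, 1)`, which
is `E[X]`. Summing, `∑ ES_α(Xᵢ) ≥ E[S] = c`.
-/

namespace DQ

section Cdf

variable (μ : Measure ℝ) {p : ℝ}

theorem bddBelow_setOf_le_cdf (hp : 0 < p) : BddBelow {x | p ≤ cdf μ x} := by
  obtain ⟨y, hy⟩ := ((tendsto_cdf_atBot μ).eventually (gt_mem_nhds hp)).exists
  exact ⟨y, fun z hz => ((monotone_cdf μ).reflect_lt (hy.trans_le hz)).le⟩

theorem nonempty_setOf_le_cdf (hp : p < 1) : {x | p ≤ cdf μ x}.Nonempty := by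
  obtain ⟨y, hy⟩ := ((tendsto_cdf_atTop μ).eventually (lt_mem_nhds hp)).exists
  exact ⟨y, hy.le⟩

theorem le_cdf_sInf_setOf_le_cdf (hp : p < 1) : p ≤ cdf μ (sInf {x | p ≤ cdf μ x}) := by
  set q := sInf {x | p ≤ cdf μ x}
  have right_limit : Tendsto (cdf μ) (nhdsWithin q (Ioi q)) (nhds (cdf μ q)) :=
    ((cdf μ).right_continuous q).mono Ioi_subset_Ici_self
  refine ge_of_tendsto right_limit ?_
  filter_upwards [self_mem_nhdsWithin] with y hy
  obtain ⟨z, hz, hzy⟩ := exists_lt_of_csInf_lt (nonempty_setOf_le_cdf μ hp) hy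
  exact hz.trans (monotone_cdf μ hzy.le)

end Cdf

section Average

theorem setAverage_union_le_setAverage_left {α : Type*} [MeasurableSpace α] {μ : Measure α}
    {f : α → ℝ} {s t : Set α} {m : ℝ} (hst : Disjoint s t) (hs : MeasurableSet s)
    (ht : MeasurableSet t) (hs₀ : μ s ≠ 0) (hs_top : μ s ≠ ⊤) (ht_top : μ t ≠ ⊤)
    (hf : IntegrableOn f (s ∪ t) μ) (hfs : ∀ x ∈ s, m ≤ f x) (hft : ∀ x ∈ t, f x ≤ m) :
    ⨍ x in s ∪ t, f x ∂μ ≤ ⨍ x in s, f x ∂μ := by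
  rcases eq_or_ne (μ t) 0 with ht₀ | ht₀
  · exact (setAverage_congr (union_ae_eq_left_of_ae_eq_empty (ae_eq_empty.2 ht₀))).le
  have m_le_average_left : m ≤ ⨍ x in s, f x ∂μ :=
    (convex_Ici m).set_average_mem isClosed_Ici hs₀ hs_top (ae_restrict_of_forall_mem hs hfs)
      hf.left_of_union
  have average_right_le_m : ⨍ x in t, f x ∂μ ≤ m :=
    (convex_Iic m).set_average_mem isClosed_Iic ht₀ ht_top (ae_restrict_of_forall_mem ht hft)
      hf.right_of_union
  have average_mem_segment := average_union_mem_segment hst.aedisjoint ht.nullMeasurableSet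
    hs_top ht_top hf.left_of_union hf.right_of_union
  rw [segment_symm] at average_mem_segment
  exact (segment_subset_Icc (average_right_le_m.trans m_le_average_left) average_mem_segment).2

theorem setAverage_Ioo_le_of_antitoneOn {f : ℝ → ℝ} {a b c : ℝ} (hab : a < b) (hbc : b < c)
    (hf : AntitoneOn f (Ioo a c)) (hf_int : IntegrableOn f (Ioo a c)) :
    ⨍ x in Ioo a c, f x ≤ ⨍ x in Ioo a b, f x := by
  rw [← Ioo_union_Ico_eq_Ioo hab hbc.le] at hf_int ⊢
  have hb : b ∈ Ioo a c := ⟨hab, hbc⟩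
  refine setAverage_union_le_setAverage_left (m := f b) ?_ measurableSet_Ioo measurableSet_Ico
    ?_ (by simp) (by simp) hf_int ?_ ?_
  · exact disjoint_left.2 fun x hx hx' => hx.2.not_ge hx'.1
  · simpa using hab
  · exact fun x hx => hf ⟨hx.1, hx.2.trans hbc⟩ hb hx.2.le
  · exact fun x hx => hf hb ⟨hab.trans_le hx.1, hx.2⟩ hx.1

end Average

theorem sInf_sep_Ioo_union_one_eq_zero {p : ℝ → Prop} (hp : ∀ β ∈ Ioo (0 : ℝ) 1, p β) :
    sInf ({β ∈ Ioo (0 : ℝ) 1 | p β} ∪ {1}) = 0 := by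
  rw [sep_eq_self_iff_mem_true.2 hp, Ioo_union_right one_pos, csInf_Ioc one_pos]

variable {Ω : Type*} [MeasurableSpace Ω] {P : Measure Ω} {X Y : Ω → ℝ} {α : ℝ}

theorem VaR_congr_ae (h : X =ᵐ[P] Y) : VaR P α X = VaR P α Y := by
  have measure_eq (x : ℝ) : P {ω | X ω ≤ x} = P {ω | Y ω ≤ x} :=
    measure_congr (eventuallyEq_set.2 (h.mono fun ω hω => by simp [hω]))
  simp only [VaR, measure_eq]

theorem ES_congr_ae (h : X =ᵐ[P] Y) : ES P α X = ES P α Y := by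
  simp only [ES, VaR_congr_ae h]

theorem ES_eq_setAverage (hα : 0 ≤ α) : ES P α X = ⨍ β in Ioo 0 α, VaR P β X := by
  rw [ES, setAverage_eq, Real.volume_real_Ioo_of_le hα, sub_zero, one_div, smul_eq_mul]

variable [IsProbabilityMeasure P]

theorem VaR_const (c : ℝ) (hα : α ∈ Ico (0 : ℝ) 1) : VaR P α (fun _ => c) = c := by
  have level_set : {x : ℝ | 1 - α ≤ (P {_ω | c ≤ x}).toReal} = Ici c := by
    ext x
    by_cases hx : c ≤ x <;> simp [hx, hα.1, hα.2]
  rw [VaR, level_set, csInf_Ici]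

theorem ES_const (c : ℝ) (hα : α ∈ Ioc (0 : ℝ) 1) : ES P α (fun _ => c) = c := by
  have VaR_eq (β : ℝ) (hβ : β ∈ Ioo 0 α) : VaR P β (fun _ => c) = c :=
    VaR_const c ⟨hβ.1.le, hβ.2.trans_le hα.2⟩
  rw [ES_eq_setAverage hα.1.le, setAverage_congr_fun measurableSet_Ioo (ae_of_all _ VaR_eq),
    setAverage_const (by simpa using hα.1) (by simp)]

theorem measureReal_setOf_le_eq_cdf_map (hX : AEMeasurable X P) (x : ℝ) :
    P.real {ω | X ω ≤ x} = cdf (P.map X) x := by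
  have := Measure.isProbabilityMeasure_map hX
  rw [cdf_eq_real, map_measureReal_apply_of_aemeasurable hX measurableSet_Iic]
  rfl

theorem VaR_eq_sInf_cdf_map (hX : AEMeasurable X P) (α : ℝ) :
    VaR P α X = sInf {x | 1 - α ≤ cdf (P.map X) x} := by
  simp only [← measureReal_setOf_le_eq_cdf_map hX]
  rfl

theorem VaR_le_of_le_measureReal (hX : AEMeasurable X P) (hα : α < 1) {x : ℝ}
    (hx : 1 - α ≤ P.real {ω | X ω ≤ x}) : VaR P α X ≤ x := by
  rw [measureReal_setOf_le_eq_cdf_map hX] at hx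
  rw [VaR_eq_sInf_cdf_map hX]
  exact csInf_le (bddBelow_setOf_le_cdf _ (sub_pos.2 hα)) hx

theorem one_sub_le_measureReal_le_VaR (hX : AEMeasurable X P) (hα : 0 < α) :
    1 - α ≤ P.real {ω | X ω ≤ VaR P α X} := by
  rw [measureReal_setOf_le_eq_cdf_map hX, VaR_eq_sInf_cdf_map hX]
  exact le_cdf_sInf_setOf_le_cdf _ (sub_lt_self 1 hα)

theorem measureReal_VaR_lt_le (hX : AEMeasurable X P) (hα : 0 < α) :
    P.real {ω | VaR P α X < X ω} ≤ α := by
  have h_compl : {ω | VaR P α X < X ω} = {ω | X ω ≤ VaR P α X}ᶜ := by ext; simp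
  rw [h_compl, probReal_compl_eq_one_sub₀ (nullMeasurableSet_le hX aemeasurable_const)]
  linarith [one_sub_le_measureReal_le_VaR hX hα]

theorem VaR_le_iff (hX : AEMeasurable X P) (hα : α ∈ Ioo (0 : ℝ) 1) {x : ℝ} :
    VaR P α X ≤ x ↔ 1 - α ≤ P.real {ω | X ω ≤ x} := by
  refine ⟨fun h => ?_, VaR_le_of_le_measureReal hX hα.2⟩
  exact (one_sub_le_measureReal_le_VaR hX hα.1).trans (measureReal_mono fun ω hω => le_trans hω h)

theorem antitoneOn_VaR (hX : AEMeasurable X P) :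
    AntitoneOn (fun β => VaR P β X) (Ioo 0 1) := by
  intro a ha b hb hab
  exact VaR_le_of_le_measureReal hX hb.2
    ((sub_le_sub_left hab 1).trans (one_sub_le_measureReal_le_VaR hX ha.1))

theorem VaR_sum_le {ι : Type*} (s : Finset ι) {X : ι → Ω → ℝ} {α : ι → ℝ}
    (hX : ∀ i ∈ s, AEMeasurable (X i) P) (hα : ∀ i ∈ s, 0 < α i) (hα_sum : ∑ i ∈ s, α i < 1) :
    VaR P (∑ i ∈ s, α i) (fun ω => ∑ i ∈ s, X i ω) ≤ ∑ i ∈ s, VaR P (α i) (X i) := by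
  have hS : AEMeasurable (fun ω => ∑ i ∈ s, X i ω) P := s.aemeasurable_fun_sum hX
  refine VaR_le_of_le_measureReal hS hα_sum ?_
  set A := {ω | ∑ i ∈ s, X i ω ≤ ∑ i ∈ s, VaR P (α i) (X i)}
  have compl_subset : Aᶜ ⊆ ⋃ i ∈ s, {ω | VaR P (α i) (X i) < X i ω} := by
    intro ω hω
    simp only [A, mem_compl_iff, mem_ofPred_eq, not_le] at hω
    obtain ⟨i, hi, hlt⟩ := Finset.exists_lt_of_sum_lt hω
    exact mem_biUnion (Finset.mem_coe.2 hi) hlt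
  have measure_compl_le : P.real Aᶜ ≤ ∑ i ∈ s, α i :=
    calc P.real Aᶜ ≤ P.real (⋃ i ∈ s, {ω | VaR P (α i) (X i) < X i ω}) :=
          measureReal_mono compl_subset (measure_ne_top _ _)
      _ ≤ ∑ i ∈ s, P.real {ω | VaR P (α i) (X i) < X i ω} := measureReal_biUnion_finset_le s _
      _ ≤ ∑ i ∈ s, α i :=
          Finset.sum_le_sum fun i hi => measureReal_VaR_lt_le (hX i hi) (hα i hi)
  rw [probReal_compl_eq_one_sub₀ (nullMeasurableSet_le hS aemeasurable_const)] at measure_compl_le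
  linarith

theorem identDistrib_VaR (hX : AEMeasurable X P) :
    IdentDistrib (fun β => VaR P β X) X (volume.restrict (Ioo 0 1)) P := by
  have hVaR : AEMeasurable (fun β => VaR P β X) (volume.restrict (Ioo 0 1)) :=
    aemeasurable_restrict_of_antitoneOn measurableSet_Ioo (antitoneOn_VaR hX)
  refine ⟨hVaR, hX, Measure.ext_of_Iic _ _ fun x => ?_⟩
  rw [Measure.map_apply_of_aemeasurable hVaR measurableSet_Iic,
    Measure.map_apply_of_aemeasurable hX measurableSet_Iic]
  set p := P.real (X ⁻¹' Iic x)
  have level_set : (fun β => VaR P β X) ⁻¹' Iic x ∩ Ioo 0 1 = Ici (1 - p) ∩ Ioo 0 1 := by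
    ext β
    refine and_congr_left fun hβ => ?_
    exact (VaR_le_iff hX hβ).trans sub_le_comm
  have interval_eq : Ici (1 - p) ∩ Icc 0 1 = Icc (1 - p) 1 := by
    have : p ≤ 1 := measureReal_le_one
    grind
  calc volume.restrict (Ioo 0 1) ((fun β => VaR P β X) ⁻¹' Iic x)
      = volume.restrict (Ioo 0 1) (Ici (1 - p)) := by
        rw [Measure.restrict_apply' measurableSet_Ioo, level_set,
          Measure.restrict_apply' measurableSet_Ioo]
    _ = volume (Icc (1 - p) 1) := by
        rw [restrict_Ioo_eq_restrict_Icc, Measure.restrict_apply' measurableSet_Icc, interval_eq]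
    _ = P (X ⁻¹' Iic x) := by
        rw [Real.volume_Icc, sub_sub_cancel, ofReal_measureReal]

theorem integral_le_ES (hX : Integrable X P) (hα : α ∈ Ioo (0 : ℝ) 1) :
    ∫ ω, X ω ∂P ≤ ES P α X := by
  have h_ident := identDistrib_VaR hX.aemeasurable
  calc ∫ ω, X ω ∂P = ∫ β in Ioo 0 1, VaR P β X := h_ident.integral_eq.symm
    _ = ⨍ β in Ioo 0 1, VaR P β X := by simp [setAverage_eq]
    _ ≤ ⨍ β in Ioo 0 α, VaR P β X := setAverage_Ioo_le_of_antitoneOn hα.1 hα.2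
        (antitoneOn_VaR hX.aemeasurable) (h_ident.integrable_iff.2 hX)
    _ = ES P α X := (ES_eq_setAverage hα.1.le).symm

section Quotient

variable {n : ℕ} {X : Fin n → Ω → ℝ} {c : ℝ}

theorem DQVaR_eq_zero_of_le_sum_VaR (hc : ∀ᵐ ω ∂P, ∑ i, X i ω = c)
    (h : c ≤ ∑ i, VaR P α (X i)) : DQVaR P α X = 0 := by
  rw [DQVaR, alphaStarVaR, sInf_sep_Ioo_union_one_eq_zero, zero_div]
  intro β hβ
  rwa [VaR_congr_ae hc, VaR_const c (Ioo_subset_Ico_self hβ)]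

theorem DQES_eq_zero_of_le_sum_ES (hc : ∀ᵐ ω ∂P, ∑ i, X i ω = c)
    (h : c ≤ ∑ i, ES P α (X i)) : DQES P α X = 0 := by
  rw [DQES, alphaStarES, sInf_sep_Ioo_union_one_eq_zero, zero_div]
  intro β hβ
  rwa [ES_congr_ae hc, ES_const c (Ioo_subset_Ioc_self hβ)]

end Quotient

end DQ

open DQ in
theorem stmt5_general {Ω : Type*} [MeasurableSpace Ω] (P : Measure Ω) [IsProbabilityMeasure P]
    (n : ℕ) (X : Fin n → Ω → ℝ) (c : ℝ) (hc : ∀ᵐ ω ∂P, (∑ i, X i ω) = c) :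
    ((∀ i, AEMeasurable (X i) P) → ∀ α ∈ Set.Ioo (0 : ℝ) (1 / n), DQVaR P α X = 0) ∧
    ((∀ i, Integrable (X i) P) → ∀ α ∈ Set.Ioo (0 : ℝ) 1, DQES P α X = 0) := by
  refine ⟨fun hX α hα => DQVaR_eq_zero_of_le_sum_VaR hc ?_,
    fun hX α hα => DQES_eq_zero_of_le_sum_ES hc ?_⟩
  · have level_nonneg : 0 ≤ n * α := mul_nonneg n.cast_nonneg hα.1.le
    have level_lt_one : n * α < 1 := by
      have hn : (0 : ℝ) < n := one_div_pos.1 (hα.1.trans hα.2)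
      exact (lt_div_iff₀' hn).1 hα.2
    calc c = VaR P (n * α) (fun ω => ∑ i, X i ω) := by
          rw [VaR_congr_ae hc, VaR_const c ⟨level_nonneg, level_lt_one⟩]
      _ ≤ ∑ i, VaR P α (X i) := by
          simpa using VaR_sum_le Finset.univ (α := fun _ => α) (fun i _ => hX i) (fun _ _ => hα.1)
            (by simpa using level_lt_one)
  · calc c = ∫ ω, ∑ i, X i ω ∂P := by simp [integral_congr_ae hc]
      _ = ∑ i, ∫ ω, X i ω ∂P := integral_finsetSum _ fun i _ => hX i
      _ ≤ ∑ i, ES P α (X i) := Finset.sum_le_sum fun i _ => integral_le_ES (hX i) hα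

open DQ in
/-- If X₁ + ⋯ + Xₙ is a.s. equal to a constant, then DQ^VaR_α(X) = 0 for every
α ∈ (0, 1/n), and, if the Xᵢ are integrable, DQ^ES_α(X) = 0 for every α ∈ (0,1). -/
theorem stmt5 {Ω : Type*} [MeasurableSpace Ω] (P : Measure Ω) [IsProbabilityMeasure P]
    (hP : Atomless P) (n : ℕ) (X : Fin n → Ω → ℝ) (hX : ∀ i, Measurable (X i))
    (c : ℝ) (hc : ∀ᵐ ω ∂P, (∑ i, X i ω) = c) :
    (∀ α ∈ Set.Ioo (0 : ℝ) (1 / n), DQVaR P α X = 0) ∧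
    ((∀ i, Integrable (X i) P) → ∀ α ∈ Set.Ioo (0 : ℝ) 1, DQES P α X = 0) := by
  obtain ⟨h_VaR, h_ES⟩ := stmt5_general P n X c hc
  exact ⟨h_VaR fun i => (hX i).aemeasurable, h_ES⟩
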